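/- Let α, β > −1 and let n ≥ 2 be an integer. Then for each integer k with 0 ≤ k and k + 2 ≤ n, the coefficients d_{k,n} satisfy the three-term recurrence d_{k,n} = [2(α−β)(k+1) / (n(n+α+β+1) − k² − (α+β+1)k)] · d_{k+1,n} + [(n(n+α+β+1) − (k+2)² + (α+β+1)(k+2)) / (n(n+α+β+1) − k² − (α+β+1)k)] · d_{k+2,n}, with initial values d_{n,n} = Γ(2n+α+β+1)/(2^{2n} Γ(n+α+β+1) n!) and d_{n−1,n} = (α−β) Γ(2n+α+β)/(2^{2n−1} Γ(n+α+β+1) (n−1)!). -/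

import Mathlib

open Finset

/-- Pochhammer symbol `(a)_j = a (a+1) ⋯ (a+j-1)`. -/
noncomputable def poch (a : ℝ) (j : ℕ) : ℝ := ∏ i ∈ Finset.range j, (a + i)

/-- Generalized binomial coefficient `binom(a, m) = a (a-1) ⋯ (a-m+1) / m!`. -/
noncomputable def gbinom (a : ℝ) (m : ℕ) : ℝ :=
  (∏ i ∈ Finset.range m, (a - i)) / (Nat.factorial m)

/-- Jacobi polynomial `P_n^{(α,β)}(x)` of a real variable. -/
noncomputable def jacobiP (α β : ℝ) (n : ℕ) (x : ℝ) : ℝ :=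
  (1 / 2 ^ n) * ∑ k ∈ Finset.range (n + 1),
    gbinom ((n : ℝ) + α) (n - k) * gbinom ((n : ℝ) + β) k * (x - 1) ^ k * (x + 1) ^ (n - k)

/-- Jacobi polynomial `P_n^{(α,β)}(z)` of a complex variable. -/
noncomputable def jacobiC (α β : ℝ) (n : ℕ) (z : ℂ) : ℂ :=
  (1 / 2 ^ n) * ∑ k ∈ Finset.range (n + 1),
    ((gbinom ((n : ℝ) + α) (n - k) * gbinom ((n : ℝ) + β) k : ℝ) : ℂ) *
      (z - 1) ^ k * (z + 1) ^ (n - k)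

/-- Chebyshev-connection coefficients `d_{k,n}`, given by a terminating ₃F₂ sum. -/
noncomputable def dCoeff (α β : ℝ) (n k : ℕ) : ℝ :=
  (poch ((n : ℝ) + α + β + 1) k * poch ((k : ℝ) + α + 1) (n - k)) /
      ((Nat.factorial (n - k)) * 2 ^ (2 * k) * (Nat.factorial k)) *
    ∑ j ∈ Finset.range (n - k + 1),
      (poch ((k : ℝ) - n) j * poch ((n : ℝ) + k + α + β + 1) j * poch ((k : ℝ) + 1 / 2) j) /
        (poch ((k : ℝ) + α + 1) j * poch (2 * (k : ℝ) + 1) j * (Nat.factorial j))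

/-- The Bernstein ellipse `E_ρ`: the set of points `z = (u + u⁻¹)/2` with `|u| = ρ`. -/
def bernsteinEllipse (ρ : ℝ) : Set ℂ :=
  {z : ℂ | ∃ u : ℂ, ‖u‖ = ρ ∧ z = (u + u⁻¹) / 2}


lemma poch_zero' (a : ℝ) : poch a 0 = 1 := by simp [poch]
lemma poch_succ' (a : ℝ) (j : ℕ) : poch a (j + 1) = poch a j * (a + j) := by
  simp [poch, Finset.prod_range_succ]
lemma poch_add' (a : ℝ) (i j : ℕ) : poch a (i + j) = poch a i * poch (a + i) j := by
  simp only [poch, Finset.prod_range_add]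
  congr 1
  apply Finset.prod_congr rfl
  intro x _
  push_cast
  ring
lemma poch_pos' (a : ℝ) (ha : 0 < a) (j : ℕ) : 0 < poch a j := by
  unfold poch
  apply Finset.prod_pos
  intro i _
  positivity

lemma poch_neg' (q j : ℕ) :
    poch (-((q + j : ℕ) : ℝ)) j * (q.factorial : ℝ) = (-1) ^ j * ((q + j).factorial : ℝ) := by
  induction j generalizing q with
  | zero => simp [poch_zero']
  | succ j ih =>
    have h := ih (q + 1)
    rw [show q + 1 + j = q + (j + 1) by ring] at h
    rw [poch_succ', pow_succ]
    rw [Nat.factorial_succ q] at h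
    push_cast at h ⊢
    linear_combination (-1) * h

lemma poch_nat' (q j : ℕ) :
    poch ((q : ℝ) + 1) j * (q.factorial : ℝ) = ((q + j).factorial : ℝ) := by
  induction j with
  | zero => simp [poch_zero']
  | succ j ih =>
    rw [poch_succ', ← add_assoc, Nat.factorial_succ]
    push_cast
    rw [← ih]
    ring

lemma poch_half' (k j : ℕ) :
    poch ((k : ℝ) + 1 / 2) j * 4 ^ j * ((k + j).factorial : ℝ) * ((2 * k).factorial : ℝ)
      = ((2 * (k + j)).factorial : ℝ) * (k.factorial : ℝ) := by
  induction j with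
  | zero => simp [poch_zero']; ring
  | succ j ih =>
    rw [poch_succ', ← add_assoc, show 2 * (k + j + 1) = 2 * (k + j) + 1 + 1 by ring,
      Nat.factorial_succ, Nat.factorial_succ, Nat.factorial_succ]
    push_cast
    linear_combination (4 * ((k:ℝ) + 1 / 2 + j) * ((k:ℝ) + j + 1)) * ih

lemma poch_Gamma' (a : ℝ) (ha : 0 < a) (j : ℕ) :
    Real.Gamma (a + j) = poch a j * Real.Gamma a := by
  induction j with
  | zero => simp [poch_zero']
  | succ j ih =>
    rw [poch_succ']
    push_cast
    rw [← add_assoc, Real.Gamma_add_one (by positivity), ih]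
    ring

/-- the coefficients of the expansion in powers, with sign -/
noncomputable def aC (α β : ℝ) (n m : ℕ) : ℝ :=
  (-1) ^ m / 4 ^ m * poch ((n : ℝ) + α + β + 1) m * poch ((m : ℝ) + α + 1) (n - m) /
    ((m.factorial : ℝ) * ((n - m).factorial : ℝ))

lemma aC_succ (α β : ℝ) (hα : -1 < α) (n m : ℕ) (h : m < n) :
    4 * ((m : ℝ) + 1) * (α + m + 1) * aC α β n (m + 1) =
      -(((n : ℝ) - m) * (n + m + α + β + 1)) * aC α β n m := by
  obtain ⟨q, rfl⟩ : ∃ q, n = m + 1 + q := ⟨n - (m + 1), by omega⟩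
  unfold aC
  rw [show m + 1 + q - (m + 1) = q by omega, show m + 1 + q - m = 1 + q by omega,
    poch_succ', poch_add' _ 1 q, add_comm 1 q, Nat.factorial_succ, Nat.factorial_succ]
  have : poch ((m : ℝ) + α + 1) 1 = (m : ℝ) + α + 1 := by simp [poch]
  rw [this]
  push_cast
  rw [show (m : ℝ) + α + 1 + 1 = m + 1 + α + 1 by ring]
  have := Nat.factorial_pos m
  have := Nat.factorial_pos q
  field_simp
  ring

lemma dCoeff_eq (α β : ℝ) (hα : -1 < α) (n k : ℕ) (h : k ≤ n) :
    dCoeff α β n k = (-1) ^ k * ∑ m ∈ Finset.range (n + 1),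
      aC α β n m * ((2 * m).choose (m + k) : ℝ) := by
  obtain ⟨q, rfl⟩ : ∃ q, n = k + q := ⟨n - k, by omega⟩
  rw [show k + q + 1 = k + (q + 1) by ring, Finset.sum_range_add, Finset.sum_eq_zero, zero_add]
  swap
  · intro m hm
    rw [Finset.mem_range] at hm
    rw [Nat.choose_eq_zero_of_lt (by omega)]
    simp
  unfold dCoeff
  rw [show k + q - k = q by omega, Finset.mul_sum, Finset.mul_sum]
  apply Finset.sum_congr rfl
  intro j hj
  rw [Finset.mem_range] at hj
  obtain ⟨r, rfl⟩ : ∃ r, q = r + j := ⟨q - j, by omega⟩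
  unfold aC
  rw [show k + (r + j) - (k + j) = r by omega]
  have e1 := poch_add' (((k + (r + j) : ℕ) : ℝ) + α + β + 1) k j
  have e2 := poch_add' ((k : ℝ) + α + 1) j r
  rw [add_comm j r] at e2
  have e3 := poch_neg' r j
  have e4 := poch_nat' (2 * k) j
  have e5 := poch_half' k j
  have e6 : ((2 * (k + j)).choose (k + j + k) : ℝ) =
      ((2 * (k + j)).factorial : ℝ) / (((2 * k + j).factorial : ℝ) * (j.factorial : ℝ)) := by
    rw [Nat.cast_choose ℝ (by omega), show k + j + k = 2 * k + j by ring,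
      show 2 * (k + j) - (2 * k + j) = j by omega]
  rw [e6, e1, e2]
  have p1 : 0 < poch ((k : ℝ) + α + 1) j := poch_pos' _ (by have : (0:ℝ) ≤ k := by positivity
                                                            linarith) j
  have p2 : 0 < poch (2 * (k : ℝ) + 1) j := poch_pos' _ (by positivity) j
  have e7 : ((k : ℝ) - ((k + (r + j) : ℕ) : ℝ)) = -((r + j : ℕ) : ℝ) := by push_cast; ring
  rw [e7]
  have e8 : ((k + (r + j) : ℕ) : ℝ) + α + β + 1 + k = ((k + (r + j) : ℕ) : ℝ) + k + α + β + 1 := by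
    ring
  have e9 : (((k + j : ℕ) : ℝ) + α + 1) = (k : ℝ) + α + 1 + j := by push_cast; ring
  rw [e8, e9]
  push_cast at e4
  have f1 : (r.factorial : ℝ) ≠ 0 := by positivity
  have f2 : ((2 * k).factorial : ℝ) ≠ 0 := by positivity
  have f3 : ((k + j).factorial : ℝ) ≠ 0 := by positivity
  have g3 : poch (-((r + j : ℕ) : ℝ)) j = (-1) ^ j * ((r + j).factorial : ℝ) / r.factorial := by
    rw [eq_div_iff f1, e3]
  have g5 : poch ((k : ℝ) + 1 / 2) j = ((2 * (k + j)).factorial : ℝ) * (k.factorial : ℝ) /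
      (4 ^ j * ((k + j).factorial : ℝ) * ((2 * k).factorial : ℝ)) := by
    rw [eq_div_iff (by positivity), ← e5]; ring
  rw [g3, g5, ← e4]
  generalize poch ((k : ℝ) + α + 1 + j) r = P
  generalize poch (((k + (r + j) : ℕ) : ℝ) + k + α + β + 1) j = Q
  generalize poch (((k + (r + j) : ℕ) : ℝ) + α + β + 1) k = R
  have f4 : (k.factorial : ℝ) ≠ 0 := by positivity
  have f5 : (j.factorial : ℝ) ≠ 0 := by positivity
  have f6 : ((r + j).factorial : ℝ) ≠ 0 := by positivity
  rw [pow_mul, show (2:ℝ)^2 = 4 by norm_num, pow_add, pow_add]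
  have hs : ((-1:ℝ)) ^ k * (-1) ^ k = 1 := by rw [← mul_pow]; simp
  generalize (-1:ℝ) ^ k = s at *
  generalize poch (2 * (k : ℝ) + 1) j = U at *
  generalize poch ((k : ℝ) + α + 1) j = V at *
  field_simp
  linear_combination (-(R * P * Q)) * hs

lemma chooseXY (m k : ℕ) : ((m : ℝ) - k) * ((2 * m).choose (m + k) : ℝ) =
    (m + k + 1) * ((2 * m).choose (m + k + 1) : ℝ) := by
  rcases le_or_gt k m with h | h
  · have := Nat.choose_succ_right_eq (2 * m) (m + k)
    rw [show 2 * m - (m + k) = m - k by omega] at this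
    have h2 : (((2 * m).choose (m + k + 1) * (m + k + 1) : ℕ) : ℝ) =
      (((2 * m).choose (m + k) * (m - k) : ℕ) : ℝ) := by rw [this]
    push_cast [Nat.cast_sub h] at h2
    linarith
  · rw [Nat.choose_eq_zero_of_lt (by omega : 2 * m < m + k),
      Nat.choose_eq_zero_of_lt (by omega : 2 * m < m + k + 1)]
    simp

lemma choosePas (m k : ℕ) : ((2 * (m + 1)).choose (m + 1 + k + 1) : ℝ) =
    ((2 * m).choose (m + k) : ℝ) + 2 * ((2 * m).choose (m + k + 1) : ℝ)
     + ((2 * m).choose (m + k + 2) : ℝ) := by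
  rw [show 2 * (m + 1) = 2 * m + 1 + 1 by ring, show m + 1 + k + 1 = m + k + 1 + 1 by ring,
    Nat.choose_succ_succ, Nat.choose_succ_succ, Nat.choose_succ_succ]
  push_cast
  ring

noncomputable def tC (α β : ℝ) (n k m : ℕ) : ℝ :=
  ((n : ℝ) * ((n : ℝ) + α + β + 1) - (k : ℝ) ^ 2 - (α + β + 1) * k) *
      ((2 * m).choose (m + k) : ℝ)
    + 2 * (α - β) * ((k : ℝ) + 1) * ((2 * m).choose (m + k + 1) : ℝ)
    - ((n : ℝ) * ((n : ℝ) + α + β + 1) - ((k : ℝ) + 2) ^ 2 + (α + β + 1) * ((k : ℝ) + 2)) *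
      ((2 * m).choose (m + k + 2) : ℝ)

lemma tC_eq (α β : ℝ) (n k m : ℕ) :
    ((m : ℝ) + 1) * tC α β n k m =
      (((n : ℝ) - m) * (n + m + α + β + 1)) * (k + 1) *
          ((2 * (m + 1)).choose (m + 1 + k + 1) : ℝ)
        + 4 * (m + 1) * (α + m) * (k + 1) * ((2 * m).choose (m + k + 1) : ℝ) := by
  have h1 := chooseXY m k
  have h2 := chooseXY m (k + 1)
  rw [choosePas]
  unfold tC
  rw [show m + (k + 1) + 1 = m + k + 2 by ring, show m + (k + 1) = m + k + 1 by ring] at h2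
  push_cast at h2
  generalize ((2 * m).choose (m + k) : ℝ) = X at *
  generalize ((2 * m).choose (m + k + 1) : ℝ) = Y at *
  generalize ((2 * m).choose (m + k + 2) : ℝ) = Z at *
  linear_combination ((((n : ℝ) - m) * (n + m + α + β + 1)) + (m + 1) * (m + k + α + β + 1)) * h1
    + ((((n : ℝ) - m) * (n + m + α + β + 1)) + (m + 1) * (m - k - 2 + α + β + 1)) * h2

lemma partial_sum (α β : ℝ) (hα : -1 < α) (n k M : ℕ) (hM : M ≤ n) :
    ∑ m ∈ Finset.range M, aC α β n m * tC α β n k m =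
      -4 * aC α β n M * (α + M) * (k + 1) * ((2 * M).choose (M + k + 1) : ℝ) := by
  induction M with
  | zero => simp
  | succ M ih =>
    rw [Finset.sum_range_succ, ih (by omega)]
    have h1 := tC_eq α β n k M
    have h2 := aC_succ α β hα n M (by omega)
    have h0 : (M : ℝ) + 1 ≠ 0 := by positivity
    apply mul_left_cancel₀ h0
    push_cast
    linear_combination aC α β n M * h1 +
      (k + 1) * ((2 * (M + 1)).choose (M + 1 + k + 1) : ℝ) * h2

lemma full_sum (α β : ℝ) (hα : -1 < α) (n k : ℕ) :
    ∑ m ∈ Finset.range (n + 1), aC α β n m * tC α β n k m = 0 := by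
  rw [Finset.sum_range_succ, partial_sum α β hα n k n le_rfl]
  have h1 := tC_eq α β n k n
  have h0 : (n : ℝ) + 1 ≠ 0 := by positivity
  apply mul_left_cancel₀ h0
  linear_combination aC α β n n * h1

lemma rec_mul (α β : ℝ) (hα : -1 < α) (n k : ℕ) (h : k + 2 ≤ n) :
    ((n : ℝ) * ((n : ℝ) + α + β + 1) - (k : ℝ) ^ 2 - (α + β + 1) * k) * dCoeff α β n k =
      2 * (α - β) * ((k : ℝ) + 1) * dCoeff α β n (k + 1) +
      ((n : ℝ) * ((n : ℝ) + α + β + 1) - ((k : ℝ) + 2) ^ 2 + (α + β + 1) * ((k : ℝ) + 2)) *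
        dCoeff α β n (k + 2) := by
  rw [dCoeff_eq α β hα n k (by omega), dCoeff_eq α β hα n (k + 1) (by omega),
    dCoeff_eq α β hα n (k + 2) (by omega)]
  have hf := full_sum α β hα n k
  have key : ∑ m ∈ Finset.range (n + 1), aC α β n m * tC α β n k m =
    ((n : ℝ) * ((n : ℝ) + α + β + 1) - (k : ℝ) ^ 2 - (α + β + 1) * k) *
      ∑ m ∈ Finset.range (n + 1), aC α β n m * ((2 * m).choose (m + k) : ℝ)
    + 2 * (α - β) * ((k : ℝ) + 1) *
      ∑ m ∈ Finset.range (n + 1), aC α β n m * ((2 * m).choose (m + (k + 1)) : ℝ)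
    - ((n : ℝ) * ((n : ℝ) + α + β + 1) - ((k : ℝ) + 2) ^ 2 + (α + β + 1) * ((k : ℝ) + 2)) *
      ∑ m ∈ Finset.range (n + 1), aC α β n m * ((2 * m).choose (m + (k + 2)) : ℝ) := by
    rw [Finset.mul_sum, Finset.mul_sum, Finset.mul_sum, ← Finset.sum_add_distrib,
      ← Finset.sum_sub_distrib]
    apply Finset.sum_congr rfl
    intro m _
    unfold tC
    rw [← add_assoc, ← add_assoc]
    ring
  rw [hf] at key
  rw [pow_succ, pow_add]
  linear_combination (-1 : ℝ) * (-1) ^ k * key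



/-- the three-term recurrence for the coefficients `d_{k,n}`, together with the
initial values `d_{n,n}` and `d_{n-1,n}`. -/
theorem dCoeff_recurrence
    (α β : ℝ) (hα : -1 < α) (hβ : -1 < β) (n : ℕ) (hn : 2 ≤ n) :
    (∀ k : ℕ, k + 2 ≤ n →
      dCoeff α β n k =
        2 * (α - β) * ((k : ℝ) + 1) /
            ((n : ℝ) * ((n : ℝ) + α + β + 1) - (k : ℝ) ^ 2 - (α + β + 1) * k) *
          dCoeff α β n (k + 1) +
        ((n : ℝ) * ((n : ℝ) + α + β + 1) - ((k : ℝ) + 2) ^ 2 + (α + β + 1) * ((k : ℝ) + 2)) /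
            ((n : ℝ) * ((n : ℝ) + α + β + 1) - (k : ℝ) ^ 2 - (α + β + 1) * k) *
          dCoeff α β n (k + 2)) ∧
    dCoeff α β n n =
      Real.Gamma (2 * (n : ℝ) + α + β + 1) /
        (2 ^ (2 * n) * Real.Gamma ((n : ℝ) + α + β + 1) * (Nat.factorial n)) ∧
    dCoeff α β n (n - 1) =
      (α - β) * Real.Gamma (2 * (n : ℝ) + α + β) /
        (2 ^ (2 * n - 1) * Real.Gamma ((n : ℝ) + α + β + 1) * (Nat.factorial (n - 1))) := by
  have hn' : (2 : ℝ) ≤ n := by exact_mod_cast hn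
  have ha : 0 < (n : ℝ) + α + β + 1 := by linarith
  have hG : Real.Gamma ((n : ℝ) + α + β + 1) ≠ 0 := (Real.Gamma_pos_of_pos ha).ne'
  refine ⟨?_, ?_, ?_⟩
  · intro k hk
    have hk' : (k : ℝ) + 2 ≤ n := by exact_mod_cast hk
    have hk0 : (0 : ℝ) ≤ k := by positivity
    have hA : (n : ℝ) * ((n : ℝ) + α + β + 1) - (k : ℝ) ^ 2 - (α + β + 1) * k ≠ 0 := by
      have : (n : ℝ) * ((n : ℝ) + α + β + 1) - (k : ℝ) ^ 2 - (α + β + 1) * k =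
        ((n : ℝ) - k) * (n + k + α + β + 1) := by ring
      rw [this]
      apply mul_ne_zero <;> apply ne_of_gt <;> linarith
    have h := rec_mul α β hα n k hk
    apply mul_left_cancel₀ hA
    rw [h]
    generalize (n : ℝ) * ((n : ℝ) + α + β + 1) - (k : ℝ) ^ 2 - (α + β + 1) * k = A at *
    field_simp
  · have h := poch_Gamma' _ ha n
    rw [show 2 * (n : ℝ) + α + β + 1 = (n : ℝ) + α + β + 1 + n by ring, h]
    unfold dCoeff
    simp [poch_zero']
    field_simp
  · obtain ⟨p, rfl⟩ : ∃ p, n = p + 1 := ⟨n - 1, by omega⟩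
    have h := poch_Gamma' _ ha p
    rw [show 2 * ((p + 1 : ℕ) : ℝ) + α + β = ((p + 1 : ℕ) : ℝ) + α + β + 1 + p by
      push_cast; ring, h]
    unfold dCoeff
    rw [show p + 1 - 1 = p by omega, show p + 1 - p = 1 by omega,
      show 2 * (p + 1) - 1 = 2 * p + 1 by omega, Finset.sum_range_succ, Finset.sum_range_one]
    have e : ∀ a, poch a 1 = a := by intro a; simp [poch]
    simp only [poch_zero', e]
    have hp : (p : ℝ) + α + 1 ≠ 0 := by
      have : (0 : ℝ) ≤ p := by positivity
      apply ne_of_gt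
      linarith
    have hp2 : 2 * (p : ℝ) + 1 ≠ 0 := by positivity
    have hfac : (p.factorial : ℝ) ≠ 0 := by positivity
    generalize poch (((p + 1 : ℕ) : ℝ) + α + β + 1) p = P
    generalize Real.Gamma (((p + 1 : ℕ) : ℝ) + α + β + 1) = G at *
    rw [pow_succ]
    push_cast
    simp only [Nat.factorial_one, Nat.factorial_zero, Nat.cast_one]
    field_simp
    ring
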